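/- Let E be a finite-dimensional real inner product space and let f, g₁, g₂ : E → ℝ be continuously differentiable. Let (ηᵏ)_{k≥1} be a sequence of positive reals with ηᵏ → 0, let (εᵏ)_{k≥1} be nonnegative reals with εᵏ → 0, and let (θᵏ)_{k≥0} be a sequence in the 2-simplex such that for some c > 0, min(θ₁ᵏ, θ₂ᵏ) ≥ c for all k. Let (yᵏ)_{k≥1} satisfy ‖∇_y L_{ηᵏ}(yᵏ; θᵏ⁻¹)‖ ≤ εᵏ for every k. If y* is a cluster point of (yᵏ) with g₁(y*) > g₂(y*), then ∇f(y*) + ∇g₁(y*) = 0; if instead g₂(y*) > g₁(y*), then ∇f(y*) + ∇g₂(y*) = 0. -/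

import Mathlib

/-!
The gradient of the smoothed objective is `∇f + ∑ⱼ wⱼ ∇gⱼ`, where `wⱼ` is the softmax weight
`θⱼ exp (gⱼ / η) / ∑ₘ θₘ exp (gₘ / η)`. If `gᵢ` strictly dominates at `y*`, then along iterates
tending to `y*` each other weight is at most `(θⱼ / θᵢ) exp ((gⱼ - gᵢ) / η)`, which tends to `0`
because `θⱼ / θᵢ` is bounded and `(gⱼ - gᵢ) / η → -∞`. The weights therefore concentrate on `i`,
and continuity of the gradients gives `∇f(y*) + ∇gᵢ(y*) = 0`.
-/

open Real Filter Topology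

section Softmax

variable {ι : Type*} [Fintype ι]

/-- The partition function of the scores `v` at temperature `η`, relative to the weights `θ`: the
common normalization of `smoothMax` and `softmax`. -/
noncomputable def weightedExpSum (η : ℝ) (θ v : ι → ℝ) : ℝ :=
  ∑ j, θ j * exp (v j / η)

/-- The weighted log-sum-exp smoothing of the maximum of the scores `v` at temperature `η`. -/
noncomputable def smoothMax (η : ℝ) (θ v : ι → ℝ) : ℝ :=
  η * log (weightedExpSum η θ v)

/-- The softmax (Gibbs) distribution of the scores `v` at temperature `η`, relative to the
weights `θ`. -/
noncomputable def softmax (η : ℝ) (θ v : ι → ℝ) (j : ι) : ℝ :=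
  θ j * exp (v j / η) / weightedExpSum η θ v

section Bounds

variable {η : ℝ} {θ v : ι → ℝ} {i : ι}

lemma mul_exp_le_weightedExpSum (hθ : ∀ j, 0 ≤ θ j) (i : ι) :
    θ i * exp (v i / η) ≤ weightedExpSum η θ v :=
  Finset.single_le_sum (f := fun j => θ j * exp (v j / η))
    (fun j _ => mul_nonneg (hθ j) (exp_nonneg _)) (Finset.mem_univ i)

lemma weightedExpSum_pos (hθ : ∀ j, 0 ≤ θ j) (hi : 0 < θ i) : 0 < weightedExpSum η θ v :=
  (mul_pos hi (exp_pos _)).trans_le (mul_exp_le_weightedExpSum hθ i)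

lemma sum_softmax (h : weightedExpSum η θ v ≠ 0) : ∑ j, softmax η θ v j = 1 := by
  simp only [softmax, ← Finset.sum_div]
  exact div_self h

lemma softmax_nonneg (hθ : ∀ j, 0 ≤ θ j) (j : ι) : 0 ≤ softmax η θ v j :=
  div_nonneg (mul_nonneg (hθ j) (exp_nonneg _))
    (Finset.sum_nonneg fun m _ => mul_nonneg (hθ m) (exp_nonneg _))

lemma softmax_le_div_mul_exp (hθ : ∀ j, 0 ≤ θ j) (hi : 0 < θ i) (j : ι) :
    softmax η θ v j ≤ θ j / θ i * exp ((v j - v i) / η) :=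
  calc softmax η θ v j
      ≤ θ j * exp (v j / η) / (θ i * exp (v i / η)) :=
        div_le_div_of_nonneg_left (mul_nonneg (hθ j) (exp_nonneg _))
          (mul_pos hi (exp_pos _)) (mul_exp_le_weightedExpSum hθ i)
    _ = θ j / θ i * exp ((v j - v i) / η) := by
        rw [sub_div, exp_sub, mul_div_mul_comm]

end Bounds

section Limit

variable {κ : Type*} {l : Filter κ} {η : κ → ℝ} {θ v : κ → ι → ℝ} {p : ι → ℝ} {C : ℝ} {i : ι}

lemma tendsto_softmax_zero_of_lt (hη : Tendsto η l (𝓝[>] 0))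
    (hθ : ∀ᶠ k in l, 0 < θ k i ∧ ∀ j, θ k j ∈ Set.Icc 0 (C * θ k i))
    (hv : Tendsto v l (𝓝 p)) {j : ι} (hj : p j < p i) :
    Tendsto (fun k => softmax (η k) (θ k) (v k) j) l (𝓝 0) := by
  have hv_sub : Tendsto (fun k => v k j - v k i) l (𝓝 (p j - p i)) :=
    (hv.apply_nhds j).sub (hv.apply_nhds i)
  have hgap : Tendsto (fun k => (v k j - v k i) / η k) l atBot :=
    hv_sub.neg_mul_atTop (sub_neg.mpr hj) hη.inv_tendsto_nhdsGT_zero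
  have hbound : Tendsto (fun k => C * exp ((v k j - v k i) / η k)) l (𝓝 0) := by
    simpa only [mul_zero] using! (tendsto_exp_atBot.comp hgap).const_mul C
  refine squeeze_zero' ?_ ?_ hbound
  · filter_upwards [hθ] with k hk
    exact softmax_nonneg (fun m => (hk.2 m).1) j
  · filter_upwards [hθ] with k ⟨hi, hk⟩
    refine (softmax_le_div_mul_exp (fun m => (hk m).1) hi j).trans ?_
    gcongr
    exact (div_le_iff₀ hi).mpr (hk j).2

lemma tendsto_softmax_single [DecidableEq ι] (hη : Tendsto η l (𝓝[>] 0))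
    (hθ : ∀ᶠ k in l, 0 < θ k i ∧ ∀ j, θ k j ∈ Set.Icc 0 (C * θ k i))
    (hv : Tendsto v l (𝓝 p)) (hp : ∀ j ≠ i, p j < p i) :
    Tendsto (fun k => softmax (η k) (θ k) (v k)) l (𝓝 (Pi.single i 1)) := by
  have hzero : ∀ j ≠ i, Tendsto (fun k => softmax (η k) (θ k) (v k) j) l (𝓝 0) :=
    fun j hj => tendsto_softmax_zero_of_lt hη hθ hv (hp j hj)
  refine tendsto_pi_nhds.mpr fun j => ?_
  obtain rfl | hj := eq_or_ne j i
  · have hrest : Tendsto (fun k => 1 - ∑ m ∈ Finset.univ.erase j, softmax (η k) (θ k) (v k) m)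
        l (𝓝 1) := by
      simpa only [Finset.sum_const_zero, sub_zero] using
        (tendsto_finsetSum _ fun m hm => hzero m (Finset.ne_of_mem_erase hm)).const_sub 1
    rw [Pi.single_eq_same]
    refine hrest.congr' ?_
    filter_upwards [hθ] with k ⟨hpos, hk⟩
    rw [← sum_softmax (weightedExpSum_pos (η := η k) (v := v k) (fun m => (hk m).1) hpos).ne',
      ← Finset.add_sum_erase _ _ (Finset.mem_univ j), add_sub_cancel_right]
  · rw [Pi.single_eq_of_ne hj]
    exact hzero j hj

end Limit

lemma mem_Icc_inv_mul_of_mem_stdSimplex {w : ι → ℝ} (hw : w ∈ stdSimplex ℝ ι) {c : ℝ}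
    (hc : 0 < c) {i : ι} (hi : c ≤ w i) (j : ι) : w j ∈ Set.Icc 0 (c⁻¹ * w i) := by
  refine ⟨hw.1 j, (mem_Icc_of_mem_stdSimplex hw j).2.trans ?_⟩
  rwa [inv_mul_eq_div, one_le_div₀ hc]

end Softmax

section Gradient

open scoped Gradient

variable {E : Type*} [NormedAddCommGroup E] [InnerProductSpace ℝ E] [CompleteSpace E]
  {ι : Type*} [Fintype ι]

lemma continuousAt_gradient_of_contDiffAt {f : E → ℝ} {x : E} (hf : ContDiffAt ℝ 1 f x) :
    ContinuousAt (∇ f) x :=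
  (InnerProductSpace.toDual ℝ E).symm.continuous.continuousAt.comp
    (hf.continuousAt_fderiv one_ne_zero)

lemma hasGradientAt_smoothMax {g : ι → E → ℝ} {g' : ι → E} {x : E}
    (hg : ∀ j, HasGradientAt (g j) (g' j) x) {η : ℝ} (hη : η ≠ 0) {θ : ι → ℝ}
    (hS : weightedExpSum η θ (g · x) ≠ 0) :
    HasGradientAt (fun z => smoothMax η θ (g · z)) (∑ j, softmax η θ (g · x) j • g' j) x := by
  have hexp (j : ι) : HasFDerivAt (fun z => θ j * exp (g j z / η))
      (θ j • exp (g j x / η) • η⁻¹ • InnerProductSpace.toDual ℝ E (g' j)) x := by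
    simpa only [← div_eq_mul_inv] using
      ((hg j).hasFDerivAt.mul_const η⁻¹).exp.const_mul (θ j)
  have hsum : HasFDerivAt (fun z => weightedExpSum η θ (g · z))
      (∑ j, θ j • exp (g j x / η) • η⁻¹ • InnerProductSpace.toDual ℝ E (g' j)) x :=
    HasFDerivAt.fun_sum fun j _ => hexp j
  refine hasGradientAt_iff_hasFDerivAt.mpr (((hsum.log hS).const_mul η).congr_fderiv ?_)
  simp only [map_sum, map_smul, Finset.smul_sum, smul_smul, softmax]
  refine Finset.sum_congr rfl fun j _ => congrArg (· • _) ?_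
  field_simp

lemma gradient_add_smoothMax {f : E → ℝ} {g : ι → E → ℝ} {x : E}
    (hf : DifferentiableAt ℝ f x) (hg : ∀ j, DifferentiableAt ℝ (g j) x) {η : ℝ} (hη : η ≠ 0)
    {θ : ι → ℝ} (hS : weightedExpSum η θ (g · x) ≠ 0) :
    ∇ (fun z => f z + smoothMax η θ (g · z)) x =
      ∇ f x + ∑ j, softmax η θ (g · x) j • ∇ (g j) x := by
  have hmax := hasGradientAt_smoothMax (fun j => (hg j).hasGradientAt) hη hS
  refine HasGradientAt.gradient (hasGradientAt_iff_hasFDerivAt.mpr ?_)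
  rw [map_add]
  exact hf.hasGradientAt.hasFDerivAt.add hmax.hasFDerivAt

lemma tendsto_gradient_add_smoothMax {κ : Type*} {l : Filter κ} {f : E → ℝ} {g : ι → E → ℝ}
    {x₀ : E} (hf : ContDiffAt ℝ 1 f x₀) (hg : ∀ j, ContDiffAt ℝ 1 (g j) x₀) {η : κ → ℝ}
    (hη : Tendsto η l (𝓝[>] 0)) {θ : κ → ι → ℝ} {C : ℝ} {i : ι}
    (hθ : ∀ᶠ k in l, 0 < θ k i ∧ ∀ j, θ k j ∈ Set.Icc 0 (C * θ k i))
    {x : κ → E} (hx : Tendsto x l (𝓝 x₀)) (hi : ∀ j ≠ i, g j x₀ < g i x₀) :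
    Tendsto (fun k => ∇ (fun z => f z + smoothMax (η k) (θ k) (g · z)) (x k)) l
      (𝓝 (∇ f x₀ + ∇ (g i) x₀)) := by
  classical
  have hvalues : Tendsto (fun k j => g j (x k)) l (𝓝 (g · x₀)) :=
    tendsto_pi_nhds.mpr fun j => (hg j).continuousAt.tendsto.comp hx
  have hweights := tendsto_pi_nhds.mp (tendsto_softmax_single hη hθ hvalues hi)
  have hgrad {h : E → ℝ} (hh : ContDiffAt ℝ 1 h x₀) :
      Tendsto (fun k => ∇ h (x k)) l (𝓝 (∇ h x₀)) :=
    (continuousAt_gradient_of_contDiffAt hh).tendsto.comp hx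
  have hlim := (hgrad hf).add
    (tendsto_finsetSum Finset.univ fun j _ => (hweights j).smul (hgrad (hg j)))
  simp only [Pi.single_apply, ite_smul, one_smul, zero_smul, Finset.sum_ite_eq',
    Finset.mem_univ, if_true] at hlim
  refine hlim.congr' ?_
  filter_upwards [hη.eventually self_mem_nhdsWithin, hθ,
    hx.eventually (hf.eventually (by simp)),
    hx.eventually (eventually_all.mpr fun j => (hg j).eventually (by simp))]
    with k hηk ⟨hpos, hk⟩ hfk hgk
  exact (gradient_add_smoothMax (hfk.differentiableAt one_ne_zero)
    (fun j => (hgk j).differentiableAt one_ne_zero) (ne_of_gt hηk)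
    (weightedExpSum_pos (fun j => (hk j).1) hpos).ne').symm

theorem tron_cluster_point_strict_component_general {κ : Type*} {l : Filter κ} {f : E → ℝ}
    {g : ι → E → ℝ} {x₀ : E} (hf : ContDiffAt ℝ 1 f x₀) (hg : ∀ j, ContDiffAt ℝ 1 (g j) x₀)
    {η : κ → ℝ} (hη : Tendsto η l (𝓝[>] 0)) {ε : κ → ℝ} (hε : Tendsto ε l (𝓝 0))
    {θ : κ → ι → ℝ} {C : ℝ} {i : ι}
    (hθ : ∀ᶠ k in l, 0 < θ k i ∧ ∀ j, θ k j ∈ Set.Icc 0 (C * θ k i)) {x : κ → E}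
    (hgrad : ∀ᶠ k in l, ‖∇ (fun z => f z + smoothMax (η k) (θ k) (g · z)) (x k)‖ ≤ ε k)
    (hx : MapClusterPt x₀ l x) (hi : ∀ j ≠ i, g j x₀ < g i x₀) :
    ∇ f x₀ + ∇ (g i) x₀ = 0 := by
  obtain ⟨U, hU, hxU⟩ := mapClusterPt_iff_ultrafilter.mp hx
  exact tendsto_nhds_unique
    (tendsto_gradient_add_smoothMax hf hg (hη.mono_left hU) (hθ.filter_mono hU) hxU hi)
    (squeeze_zero_norm' (hgrad.filter_mono hU) (hε.mono_left hU))

end Gradient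

/-- If the dual iterates are bounded away from the simplex boundary
(`min θ₁ᵏ θ₂ᵏ ≥ c > 0`), then at any cluster point `y*` of the inexact
minimizers, the gradient condition holds with full weight on the strictly
larger component: if `g₁(y*) > g₂(y*)` then `∇f(y*) + ∇g₁(y*) = 0`, and
if `g₂(y*) > g₁(y*)` then `∇f(y*) + ∇g₂(y*) = 0`. -/
theorem tron_cluster_point_strict_component
    {E : Type*} [NormedAddCommGroup E] [InnerProductSpace ℝ E]
    [FiniteDimensional ℝ E]
    (f g₁ g₂ : E → ℝ)
    (hf : ContDiff ℝ 1 f) (hg₁ : ContDiff ℝ 1 g₁) (hg₂ : ContDiff ℝ 1 g₂)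
    (η : ℕ → ℝ) (hηpos : ∀ k, 0 < η k)
    (hηlim : Tendsto η atTop (𝓝 0))
    (ε : ℕ → ℝ) (hεnonneg : ∀ k, 0 ≤ ε k)
    (hεlim : Tendsto ε atTop (𝓝 0))
    (θ : ℕ → ℝ × ℝ)
    (hθ : ∀ k, 0 ≤ (θ k).1 ∧ 0 ≤ (θ k).2 ∧ (θ k).1 + (θ k).2 = 1)
    (c : ℝ) (hc : 0 < c)
    (hθmin : ∀ k, c ≤ min (θ k).1 (θ k).2)
    (y : ℕ → E)
    (hy : ∀ k : ℕ,
      ‖gradient (fun z : E => f z + η (k + 1) *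
        Real.log ((θ k).1 * Real.exp (g₁ z / η (k + 1)) +
                  (θ k).2 * Real.exp (g₂ z / η (k + 1)))) (y (k + 1))‖
        ≤ ε (k + 1))
    (ystar : E)
    (hcluster : ∃ φ : ℕ → ℕ, StrictMono φ ∧ Tendsto (y ∘ φ) atTop (𝓝 ystar)) :
    (g₁ ystar > g₂ ystar → gradient f ystar + gradient g₁ ystar = 0) ∧
    (g₂ ystar > g₁ ystar → gradient f ystar + gradient g₂ ystar = 0) := by
  have := FiniteDimensional.complete ℝ E
  obtain ⟨φ, hφ, hφy⟩ := hcluster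
  have hy_cluster : MapClusterPt ystar atTop fun k => y (k + 1) := by
    have := hφy.mapClusterPt.of_comp hφ.tendsto_atTop
    rwa [← map_add_atTop_eq_nat 1, ← mapClusterPt_comp] at this
  let g : Fin 2 → E → ℝ := ![g₁, g₂]
  let w (k : ℕ) : Fin 2 → ℝ := ![(θ k).1, (θ k).2]
  have hg : ∀ j, ContDiff ℝ 1 (g j) := Fin.forall_fin_two.mpr ⟨hg₁, hg₂⟩
  have hw_mem (k : ℕ) : w k ∈ stdSimplex ℝ (Fin 2) :=
    ⟨Fin.forall_fin_two.mpr ⟨(hθ k).1, (hθ k).2.1⟩, by simpa [w] using (hθ k).2.2⟩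
  have hw_ge (k : ℕ) : ∀ i, c ≤ w k i := Fin.forall_fin_two.mpr (le_min_iff.mp (hθmin k))
  have hcritical (i : Fin 2) : (∀ j ≠ i, g j ystar < g i ystar) →
      gradient f ystar + gradient (g i) ystar = 0 :=
    tron_cluster_point_strict_component_general hf.contDiffAt (fun j => (hg j).contDiffAt)
      ((tendsto_nhdsWithin_iff.mpr ⟨hηlim, .of_forall hηpos⟩).comp (tendsto_add_atTop_nat 1))
      (hεlim.comp (tendsto_add_atTop_nat 1))
      (.of_forall fun k => ⟨hc.trans_le (hw_ge k i),
        mem_Icc_inv_mul_of_mem_stdSimplex (hw_mem k) hc (hw_ge k i)⟩)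
      (.of_forall fun k => by simpa [smoothMax, weightedExpSum, g, w] using hy k) hy_cluster
  exact ⟨fun h => hcritical 0 (by simpa [Fin.forall_fin_two, g] using h),
    fun h => hcritical 1 (by simpa [Fin.forall_fin_two, g] using h)⟩
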